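/- arXiv:2504.06038 — 2 statements merged into one kernel-verified Lean document; each statement's English description precedes it below -/
import Mathlib

section
/- Let K ≥ 1 and let r_{−K},…,r_K ∈ ℂ satisfy r_{−n} = conj(r_n) for all n, so that R(f) = Σ_{n=−K}^{K} r_n e^{−i 2π f n} is real-valued. Let [a, b] ⊂ [−1/2, 1/2] with a < b and tan(πa), tan(πb) defined. Then R(f) ≥ 0 for all f ∈ [a, b] if and only if there exist a positive semidefinite Hermitian matrix Q ∈ ℂ^{(K+1)×(K+1)} and a positive semidefinite Hermitian matrix P ∈ ℂ^{K×K} such that for every n ∈ {0,…,K}, r_n = Tr(Θ_{K+1}^(n) Q) + Tr(Φ_K^(n) P). -/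
open Matrix
open scoped ComplexOrder

/-!
Put `u = e^{-2πif}`, `t = tan(πf)`, `A = tan(πa)` and `B = tan(πb)`. The traces against `Θ^(n)` are
the Fourier coefficients of the Hermitian form `v* Q v` on the moment curve, and those against
`Φ^(n)` are the Fourier coefficients of `D(f) · w* P w`, where `D(f) = cos²(πf) (t - A) (B - t)`
(`sum_trace_elemToeplitz`, `sum_trace_phiMat`, `weight_eq`). As `D ≥ 0` on `[a, b]`, a
parametrization by positive semidefinite `Q` and `P` makes `R` nonnegative there.

Conversely, `R(f) = cos(πf)^(2K) G(t)` with `G` a real polynomial of degree at most `2K` that is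
nonnegative on `[A, B]` (`exists_tan_polynomial`). Such a `G` is `σ₀ + (X - A)(B - X) σ₁` with sums of
squares `σ₀`, `σ₁` of degrees at most `2K` and `2K - 2` (`mem_segmentCone_of_nonneg`). This is proved
by factoring `G`: each factor `X - c` with `c ≤ A`, `c - X` with `c ≥ B`, `(X - c)²`, or
`(X - x)² + y²` lies in a cone of products of `X - A`, `B - X` and squares, and these cones are
closed under multiplication.
Homogenizing the squares with `cos(πf)` and `sin(πf)` turns them into squared moduli of polynomials
in `u`, hence into rank-one positive semidefinite matrices (`exists_rep_of_mem_segmentCone`). The two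
trigonometric polynomials then agree on `[a, b]`, hence at infinitely many points of the circle, and
their coefficients are equal (`coeff_eq_of_sum_eq`).
-/

/-- The elementary Toeplitz matrix `Θ_M^(m)`: the `M × M` matrix whose `(j,k)` entry is `1`
if `k - j = m` and `0` otherwise. -/
def elemToeplitz (M : ℕ) (m : ℤ) : Matrix (Fin M) (Fin M) ℂ :=
  Matrix.of fun j k => if ((k : ℤ) - (j : ℤ) = m) then 1 else 0

/-- `Φ_M^(n) = d_0 Θ_M^(n) + conj(d_1) Θ_M^(n+1) + d_1 Θ_M^(n-1)`. -/
noncomputable def phiMat (M : ℕ) (d0 : ℝ) (d1 : ℂ) (n : ℤ) : Matrix (Fin M) (Fin M) ℂ :=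
  (d0 : ℂ) • elemToeplitz M n + (starRingEnd ℂ) d1 • elemToeplitz M (n + 1) +
    d1 • elemToeplitz M (n - 1)

/-! ### Real polynomials that are nonnegative on a segment -/

open Polynomial in
/-- The cone spanned by the products `(X - A)^i (B - X)^j s²` of formal degree exactly `n`, where
`s` counts as having degree `m ≥ natDegree s`. For `n = 2K` the exponents `i` and `j` have the
same parity, so it consists of sums `σ₀ + (X - A)(B - X) σ₁` with `σ₀, σ₁` sums of squares of
polynomials of degree at most `K` and `K - 1`. -/
noncomputable def segmentCone (A B : ℝ) (n : ℕ) : AddSubmonoid ℝ[X] :=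
  AddSubmonoid.closure {g | ∃ (i j m : ℕ) (s : ℝ[X]), i + j + 2 * m = n ∧ s.natDegree ≤ m ∧
    g = (X - C A) ^ i * (C B - X) ^ j * s ^ 2}

section cone
open Polynomial

lemma segmentCone_mul {A B : ℝ} {n m : ℕ} {g h : ℝ[X]} (hg : g ∈ segmentCone A B n)
    (hh : h ∈ segmentCone A B m) : g * h ∈ segmentCone A B (n + m) := by
  induction hg using AddSubmonoid.closure_induction with
  | zero => simp [zero_mem]
  | add x y _ _ hx hy => rw [add_mul]; exact add_mem hx hy
  | mem x hx =>
    induction hh using AddSubmonoid.closure_induction with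
    | zero => simp [zero_mem]
    | add y z _ _ hy hz => rw [mul_add]; exact add_mem hy hz
    | mem y hy =>
      obtain ⟨i, j, k, s, h1, h2, rfl⟩ := hx
      obtain ⟨i', j', k', s', h1', h2', rfl⟩ := hy
      refine AddSubmonoid.subset_closure ⟨i + i', j + j', k + k', s * s', by omega,
        natDegree_mul_le.trans (by omega), by ring⟩

lemma C_mem_segmentCone_zero {A B c : ℝ} (hc : 0 ≤ c) : C c ∈ segmentCone A B 0 :=
  AddSubmonoid.subset_closure ⟨0, 0, 0, C √c, by simp, by simp, by
    rw [← C_pow, Real.sq_sqrt hc]; simp⟩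

lemma X_sub_C_mem_segmentCone (A B : ℝ) : X - C A ∈ segmentCone A B 1 :=
  AddSubmonoid.subset_closure ⟨1, 0, 0, 1, by simp, by simp, by simp⟩

lemma C_sub_X_mem_segmentCone (A B : ℝ) : C B - X ∈ segmentCone A B 1 :=
  AddSubmonoid.subset_closure ⟨0, 1, 0, 1, by simp, by simp, by simp⟩

/-- Constants lie in the cone of degree one because `(X - A) + (B - X) = B - A > 0`. This makes the
cones increasing in `n`, although their generators have formal degree exactly `n`. -/
lemma C_mem_segmentCone_one {A B c : ℝ} (hAB : A < B) (hc : 0 ≤ c) :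
    C c ∈ segmentCone A B 1 := by
  have h : C c = C (c / (B - A)) * ((X - C A) + (C B - X)) := by
    have : (X - C A) + (C B - X) = C (B - A) := by rw [C_sub]; ring
    rw [this, ← C_mul, div_mul_cancel₀ _ (sub_ne_zero.2 hAB.ne')]
  rw [h, ← zero_add 1]
  exact segmentCone_mul (C_mem_segmentCone_zero (div_nonneg hc (sub_pos.2 hAB).le))
    (add_mem (X_sub_C_mem_segmentCone A B) (C_sub_X_mem_segmentCone A B))

lemma C_mem_segmentCone {A B c : ℝ} (hAB : A < B) (hc : 0 ≤ c) (n : ℕ) :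
    C c ∈ segmentCone A B n := by
  induction n with
  | zero => exact C_mem_segmentCone_zero hc
  | succ n ih =>
    simpa using segmentCone_mul ih (C_mem_segmentCone_one hAB zero_le_one)

lemma sq_mem_segmentCone {A B : ℝ} (c : ℝ) : (X - C c) ^ 2 ∈ segmentCone A B 2 :=
  AddSubmonoid.subset_closure ⟨0, 0, 1, X - C c, by simp, by simp, by simp⟩

/-- Nonnegativity on `[A, B]` passes to a cofactor `H` of a polynomial positive on `(A, B)` away
from one point `c`; at `c` and at the endpoints this is continuity. -/
lemma eval_nonneg_of_mul {A B c : ℝ} (hAB : A < B) {g H : ℝ[X]}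
    (h : ∀ t ∈ Set.Icc A B, 0 ≤ (g * H).eval t)
    (hg : ∀ t ∈ Set.Ioo A B, t ≠ c → 0 < g.eval t) :
    ∀ t ∈ Set.Icc A B, 0 ≤ H.eval t := by
  have hcl : IsClosed {t : ℝ | 0 ≤ H.eval t} := isClosed_le continuous_const H.continuous
  have hsub : Set.Ioo A B ∩ {c}ᶜ ⊆ {t : ℝ | 0 ≤ H.eval t} := by
    rintro t ⟨ht, htc⟩
    have h1 := h t (Set.Ioo_subset_Icc_self ht)
    rw [eval_mul] at h1
    exact nonneg_of_mul_nonneg_right h1 (hg t ht htc)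
  have h2 : Set.Ioo A B ⊆ {t : ℝ | 0 ≤ H.eval t} :=
    ((dense_compl_singleton c).open_subset_closure_inter isOpen_Ioo).trans
      (hcl.closure_subset_iff.2 hsub)
  have h3 := hcl.closure_subset_iff.2 h2
  rwa [closure_Ioo hAB.ne] at h3

/-- A Lukács-type representation, by strong induction on `n`: a factor of `G` through one of its
complex roots is split off, and both the factor and the quotient lie in a cone. -/
theorem mem_segmentCone_of_nonneg {A B : ℝ} (hAB : A < B) (n : ℕ) (G : ℝ[X])
    (hn : G.natDegree ≤ n) (hG : ∀ t ∈ Set.Icc A B, 0 ≤ G.eval t) :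
    G ∈ segmentCone A B n := by
  induction n using Nat.strong_induction_on generalizing G with
  | _ n ih =>
  have step : ∀ (g H : ℝ[X]) (k : ℕ) (c : ℝ), 0 < k → G ≠ 0 → G = g * H → g.natDegree = k →
      g ∈ segmentCone A B k → (∀ t ∈ Set.Ioo A B, t ≠ c → 0 < g.eval t) →
      G ∈ segmentCone A B n := by
    intro g H k c hk h0 hGH hgk hg hpos
    have hdeg : G.natDegree = k + H.natDegree := by
      rw [hGH] at h0 ⊢
      rw [natDegree_mul (left_ne_zero_of_mul h0) (right_ne_zero_of_mul h0), hgk]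
    have hH := eval_nonneg_of_mul hAB (hGH ▸ hG) hpos
    have := segmentCone_mul hg (ih (n - k) (by omega) H (by omega) hH)
    rwa [← hGH, Nat.add_sub_cancel' (by omega)] at this
  by_cases hd : G.natDegree = 0
  · rw [eq_C_of_natDegree_eq_zero hd] at hG ⊢
    exact C_mem_segmentCone hAB (by simpa using hG A ⟨le_rfl, hAB.le⟩) n
  have h0 : G ≠ 0 := by rintro rfl; simp at hd
  obtain ⟨z, hz⟩ := IsAlgClosed.exists_aeval_eq_zero ℂ G
    (by rw [degree_eq_natDegree h0]; exact_mod_cast hd)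
  by_cases him : z.im = 0
  · obtain ⟨c, rfl⟩ : ∃ c : ℝ, z = c := ⟨z.re, by apply Complex.ext <;> simp [him]⟩
    have hc : G.IsRoot c := by
      have : aeval (algebraMap ℝ ℂ c) G = 0 := hz
      rw [aeval_algebraMap_apply] at this
      simpa using this
    obtain ⟨H, hH⟩ := dvd_iff_isRoot.2 hc
    rcases le_or_gt c A with hcA | hcA
    · refine step (X - C c) H 1 c one_pos h0 hH (natDegree_X_sub_C c) ?_ ?_
      · have : X - C c = (X - C A) + C (A - c) := by rw [C_sub]; ring
        rw [this]
        exact add_mem (X_sub_C_mem_segmentCone A B)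
          (C_mem_segmentCone hAB (sub_nonneg.2 hcA) 1)
      · intro t ht _
        simp only [eval_sub, eval_X, eval_C]; linarith [ht.1]
    rcases le_or_gt B c with hcB | hcB
    · refine step (C c - X) (-H) 1 c one_pos h0 (by rw [hH]; ring) ?_ ?_ ?_
      · rw [← neg_sub, natDegree_neg, natDegree_X_sub_C]
      · have : C c - X = (C B - X) + C (c - B) := by rw [C_sub]; ring
        rw [this]
        exact add_mem (C_sub_X_mem_segmentCone A B)
          (C_mem_segmentCone hAB (sub_nonneg.2 hcB) 1)
      · intro t ht _
        simp only [eval_sub, eval_X, eval_C]; linarith [ht.2]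
    -- An interior root is a minimum of `G`, hence at least a double root.
    · have hmin : IsLocalMin (fun t => G.eval t) c := by
        filter_upwards [Ioo_mem_nhds hcA hcB] with t ht
        rw [hc.eq_zero]
        exact hG t (Set.Ioo_subset_Icc_self ht)
      have hder := hmin.deriv_eq_zero
      rw [Polynomial.deriv, hH] at hder
      have hHc : H.IsRoot c := by simpa [derivative_mul] using hder
      obtain ⟨H', hH'⟩ := dvd_iff_isRoot.2 hHc
      refine step ((X - C c) ^ 2) H' 2 c two_pos h0 (by rw [hH, hH']; ring) (by simp)
        (sq_mem_segmentCone c) ?_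
      intro t _ htc
      have : t - c ≠ 0 := sub_ne_zero.2 htc
      simp only [eval_pow, eval_sub, eval_X, eval_C]; positivity
  · obtain ⟨H, hH⟩ := quadratic_dvd_of_aeval_eq_zero_im_ne_zero G hz him
    have hq : X ^ 2 - C (2 * z.re) * X + C (‖z‖ ^ 2) = (X - C z.re) ^ 2 + C (z.im ^ 2) := by
      rw [Complex.sq_norm, Complex.normSq_apply]
      simp only [C_mul, C_add, C_pow, map_ofNat]; ring
    refine step _ H 2 0 two_pos h0 hH (by compute_degree!) ?_ ?_
    · rw [hq]
      exact add_mem (sq_mem_segmentCone _) (C_mem_segmentCone hAB (sq_nonneg _) 2)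
    · intro t _ _
      rw [hq]
      simp only [eval_add, eval_pow, eval_sub, eval_X, eval_C]; positivity
end cone

/-! ### Trigonometric polynomials attached to matrices -/

/-- The trigonometric polynomial `∑ Q_{kj} u^k conj(u)^j`, that is `v* Q v` for the vector
`v_j = conj(u)^j`. -/
noncomputable def hermForm {M : ℕ} (Q : Matrix (Fin M) (Fin M) ℂ) (u : ℂ) : ℂ :=
  ∑ k, ∑ j, Q k j * u ^ (k : ℕ) * (starRingEnd ℂ u) ^ (j : ℕ)

/-- The point `e^{-2πif}` of the unit circle; `R(f)` is a Laurent polynomial in it. -/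
noncomputable def circlePt (f : ℝ) : ℂ := Complex.exp (-(2 * Real.pi * f) * Complex.I)

/-- The square root `e^{-πif}` of `circlePt f`, equal to `cos(πf) (1 - i tan(πf))`. -/
noncomputable def halfPt (f : ℝ) : ℂ := Complex.exp (-(Real.pi * f) * Complex.I)

lemma circlePt_eq_sq (f : ℝ) : circlePt f = halfPt f ^ 2 := by
  rw [circlePt, halfPt, ← Complex.exp_nat_mul]; congr 1; push_cast; ring

lemma halfPt_eq (f : ℝ) :
    halfPt f = Real.cos (Real.pi * f) - Real.sin (Real.pi * f) * Complex.I := by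
  rw [halfPt, Complex.exp_mul_I, Complex.cos_neg, Complex.sin_neg]
  push_cast; ring

lemma halfPt_ne_zero (f : ℝ) : halfPt f ≠ 0 := Complex.exp_ne_zero _

lemma circlePt_ne_zero (f : ℝ) : circlePt f ≠ 0 := Complex.exp_ne_zero _

lemma conj_halfPt (f : ℝ) : starRingEnd ℂ (halfPt f) = (halfPt f)⁻¹ := by
  rw [halfPt, ← Complex.exp_conj, ← Complex.exp_neg]; congr 1; simp

lemma conj_circlePt (f : ℝ) : starRingEnd ℂ (circlePt f) = (circlePt f)⁻¹ := by
  rw [circlePt_eq_sq, map_pow, conj_halfPt, inv_pow]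

lemma halfPt_eq_tan {f : ℝ} (hc : Real.cos (Real.pi * f) ≠ 0) :
    halfPt f = Real.cos (Real.pi * f) * (1 - Complex.I * Real.tan (Real.pi * f)) := by
  have hc' : (Real.cos (Real.pi * f) : ℂ) ≠ 0 := by exact_mod_cast hc
  rw [halfPt_eq, Real.tan_eq_sin_div_cos, Complex.ofReal_div]
  field_simp

lemma inv_halfPt_eq_tan {f : ℝ} (hc : Real.cos (Real.pi * f) ≠ 0) :
    (halfPt f)⁻¹ = Real.cos (Real.pi * f) * (1 + Complex.I * Real.tan (Real.pi * f)) := by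
  rw [← conj_halfPt, halfPt_eq_tan hc]
  simp only [map_mul, map_sub, map_one, Complex.conj_ofReal, Complex.conj_I]
  ring

lemma exp_eq_circlePt_zpow (f : ℝ) (n : ℤ) :
    Complex.exp (-(2 * Real.pi * f * n) * Complex.I) = circlePt f ^ n := by
  rw [circlePt, ← Complex.exp_int_mul]; congr 1; ring

lemma trace_elemToeplitz_mul {M : ℕ} (m : ℤ) (Q : Matrix (Fin M) (Fin M) ℂ) :
    Matrix.trace (elemToeplitz M m * Q) =
      ∑ k : Fin M, ∑ j : Fin M, if (k : ℤ) - (j : ℤ) = m then Q k j else 0 := by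
  rw [Finset.sum_comm]
  simp [Matrix.trace, Matrix.mul_apply, elemToeplitz]

/-- The traces against shifted elementary Toeplitz matrices are the Fourier coefficients of
`hermForm Q`; the bound on `M` and `e` ensures that `[-K, K]` contains every frequency. -/
lemma sum_trace_elemToeplitz {M K : ℕ} (Q : Matrix (Fin M) (Fin M) ℂ) (e : ℤ) (f : ℝ)
    (hM : (M : ℤ) + |e| ≤ K + 1) :
    ∑ n ∈ Finset.Icc (-(K : ℤ)) K,
        Matrix.trace (elemToeplitz M (n + e) * Q) * circlePt f ^ n =
      circlePt f ^ (-e) * hermForm Q (circlePt f) := by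
  simp only [trace_elemToeplitz_mul, hermForm, Finset.sum_mul, Finset.mul_sum]
  rw [Finset.sum_comm]
  refine Finset.sum_congr rfl fun k _ => ?_
  rw [Finset.sum_comm]
  refine Finset.sum_congr rfl fun j _ => ?_
  have hk := k.2
  have hj := j.2
  rw [Finset.sum_eq_single ((k : ℤ) - j - e)]
  · rw [if_pos (by ring), conj_circlePt, zpow_sub₀ (circlePt_ne_zero f),
      zpow_sub₀ (circlePt_ne_zero f), _root_.zpow_neg]
    simp only [zpow_natCast, inv_pow]
    ring
  · intro n _ hn
    rw [if_neg (by omega), zero_mul]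
  · intro hn
    exfalso
    apply hn
    rw [Finset.mem_Icc]
    have h1 := neg_abs_le e
    have h2 := le_abs_self e
    omega

lemma sum_trace_phiMat {K : ℕ} (P : Matrix (Fin K) (Fin K) ℂ) (d0 : ℝ) (d1 : ℂ) (f : ℝ) :
    ∑ n ∈ Finset.Icc (-(K : ℤ)) K, Matrix.trace (phiMat K d0 d1 n * P) * circlePt f ^ n =
      (d0 + starRingEnd ℂ d1 * (circlePt f)⁻¹ + d1 * circlePt f) * hermForm P (circlePt f) := by
  have h0 := sum_trace_elemToeplitz (K := K) P 0 f (by simp)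
  have h1 := sum_trace_elemToeplitz (K := K) P 1 f (by simp)
  have h2 := sum_trace_elemToeplitz (K := K) P (-1) f (by simp)
  simp only [add_zero, neg_zero, zpow_zero, one_mul, neg_neg, zpow_one, _root_.zpow_neg_one,
    ← sub_eq_add_neg] at h0 h1 h2
  rw [add_mul, add_mul, mul_assoc _ (circlePt f)⁻¹, mul_assoc d1, ← h1, ← h2, ← h0]
  simp only [Finset.mul_sum, ← Finset.sum_add_distrib]
  refine Finset.sum_congr rfl fun n _ => ?_
  simp only [phiMat, add_mul, Matrix.smul_mul, Matrix.trace_add, Matrix.trace_smul, smul_eq_mul]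
  ring

/-- The symbol `D(f)` of the matrices `Φ` is `cos²(πf) (tan(πf) - A) (B - tan(πf))`; this is what
the choice of `d_0` and `d_1` achieves. -/
lemma weight_eq {f : ℝ} (hc : Real.cos (Real.pi * f) ≠ 0) (A B : ℝ) :
    (((-(A * B + 1) / 2 : ℝ) : ℂ) +
        starRingEnd ℂ (((1 - A * B) / 4 : ℝ) + Complex.I * ((A + B) / 4 : ℝ)) * (circlePt f)⁻¹ +
        (((1 - A * B) / 4 : ℝ) + Complex.I * ((A + B) / 4 : ℝ)) * circlePt f) =
      ((Real.cos (Real.pi * f) ^ 2 * ((Real.tan (Real.pi * f) - A) *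
        (B - Real.tan (Real.pi * f))) : ℝ) : ℂ) := by
  have h1 : (Real.cos (Real.pi * f) : ℂ) ^ 2 * (1 + (Real.tan (Real.pi * f) : ℂ) ^ 2) = 1 := by
    have : Real.cos (Real.pi * f) ^ 2 * (1 + Real.tan (Real.pi * f) ^ 2) = 1 := by
      rw [Real.tan_eq_sin_div_cos]; field_simp; exact Real.cos_sq_add_sin_sq _
    exact_mod_cast this
  rw [circlePt_eq_sq, ← inv_pow, inv_halfPt_eq_tan hc, halfPt_eq_tan hc]
  simp only [map_add, map_mul, Complex.conj_ofReal, Complex.conj_I]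
  generalize Real.cos (Real.pi * f) = c at *
  generalize Real.tan (Real.pi * f) = t at *
  push_cast
  linear_combination (-(A * B + 1) / 2 : ℂ) * (-h1) +
    ((A + B) * c ^ 2 * t * (-1) + (1 - A * B) / 2 * c ^ 2 * t ^ 2) * Complex.I_sq

lemma hermForm_nonneg {M : ℕ} {Q : Matrix (Fin M) (Fin M) ℂ} (hQ : Q.PosSemidef) (u : ℂ) :
    0 ≤ hermForm Q u := by
  have h := hQ.dotProduct_mulVec_nonneg (fun k : Fin M => (starRingEnd ℂ u) ^ (k : ℕ))
  convert h using 1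
  simp only [hermForm, dotProduct, mulVec, Finset.mul_sum]
  refine Finset.sum_congr rfl fun k _ => Finset.sum_congr rfl fun j _ => ?_
  simp
  ring

lemma hermForm_add {M : ℕ} (Q Q' : Matrix (Fin M) (Fin M) ℂ) (u : ℂ) :
    hermForm (Q + Q') u = hermForm Q u + hermForm Q' u := by
  simp [hermForm, add_mul, Finset.sum_add_distrib]

@[simp] lemma hermForm_zero {M : ℕ} (u : ℂ) :
    hermForm (0 : Matrix (Fin M) (Fin M) ℂ) u = 0 := by
  simp [hermForm]

lemma hermForm_vecMulVec {M : ℕ} (q : Fin M → ℂ) (u : ℂ) :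
    hermForm (vecMulVec q (star q)) u =
      (∑ k, q k * u ^ (k : ℕ)) * starRingEnd ℂ (∑ k, q k * u ^ (k : ℕ)) := by
  simp only [hermForm, map_sum, Finset.sum_mul_sum, vecMulVec_apply]
  refine Finset.sum_congr rfl fun k _ => Finset.sum_congr rfl fun j _ => ?_
  simp
  ring

/-! ### Passing between `tan(πf)` and `e^{-2πif}` -/

section transfer
open Polynomial

/-- A square in `tan(πf)`, cleared of denominators by a power of `cos(πf)`, is the trigonometric
polynomial of a rank-one positive semidefinite matrix. -/
lemma exists_hermForm_eq_sq {M : ℕ} {s : ℝ[X]} (hs : s.natDegree < M) :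
    ∃ P : Matrix (Fin M) (Fin M) ℂ, P.PosSemidef ∧ ∀ f : ℝ, Real.cos (Real.pi * f) ≠ 0 →
      hermForm P (circlePt f) =
        (((Real.cos (Real.pi * f) ^ (M - 1) * s.eval (Real.tan (Real.pi * f))) ^ 2 : ℝ) : ℂ) := by
  -- With `u = e^{-2πif}`, `e^{-πif} cos(πf) = (1 + u) / 2` and `e^{-πif} sin(πf) = -i (1 - u) / 2`,
  -- so `q(u) = e^{-πif(M-1)} cos(πf)^(M-1) s(tan(πf))`.
  let q : ℂ[X] := ∑ j ∈ Finset.range M, C (s.coeff j : ℂ) *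
    (C (1 / 2) * (1 + X)) ^ (M - 1 - j) * (C (-Complex.I / 2) * (1 - X)) ^ j
  have hqd : q.natDegree < M := by
    have : q.natDegree ≤ M - 1 := by
      refine natDegree_sum_le_of_forall_le _ _ fun j hj => ?_
      have h1 : (C (1 / 2 : ℂ) * (1 + X)).natDegree ≤ 1 := by compute_degree
      have h2 : (C (-Complex.I / 2) * (1 - X)).natDegree ≤ 1 := by compute_degree
      have hj := Finset.mem_range.1 hj
      refine natDegree_mul_le.trans ?_
      have h3 := natDegree_C_mul_le (s.coeff j : ℂ) ((C (1 / 2) * (1 + X)) ^ (M - 1 - j))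
      have h4 := natDegree_pow_le_of_le (M - 1 - j) h1
      have h5 := natDegree_pow_le_of_le j h2
      omega
    omega
  refine ⟨vecMulVec (fun k => q.coeff k) (star fun k => q.coeff k),
    posSemidef_vecMulVec_self_star _, fun f hc => ?_⟩
  have hq : ∑ k : Fin M, q.coeff k * circlePt f ^ (k : ℕ) =
      halfPt f ^ (M - 1) *
        ((Real.cos (Real.pi * f) ^ (M - 1) * s.eval (Real.tan (Real.pi * f)) : ℝ) : ℂ) := by
    rw [Fin.sum_univ_eq_sum_range (fun k => q.coeff k * circlePt f ^ k), 
      ← eval_eq_sum_range' hqd, eval_eq_sum_range' hs, eval_finsetSum]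
    push_cast
    simp only [Finset.mul_sum]
    refine Finset.sum_congr rfl fun j hj => ?_
    have hj := Finset.mem_range.1 hj
    have hw : halfPt f * (halfPt f)⁻¹ = 1 := mul_inv_cancel₀ (halfPt_ne_zero f)
    have hw1 := halfPt_eq_tan hc
    have hw2 := inv_halfPt_eq_tan hc
    have h1 : 1 / 2 * (1 + circlePt f) = halfPt f * Real.cos (Real.pi * f) := by
      rw [circlePt_eq_sq]
      linear_combination (halfPt f / 2) * (hw1 + hw2) - 1 / 2 * hw
    have h2 : -Complex.I / 2 * (1 - circlePt f) =
        halfPt f * (Real.cos (Real.pi * f) * Real.tan (Real.pi * f)) := by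
      rw [circlePt_eq_sq]
      linear_combination (-Complex.I / 2 * halfPt f) * (hw2 - hw1) + Complex.I / 2 * hw -
        halfPt f * Real.cos (Real.pi * f) * Real.tan (Real.pi * f) * Complex.I_sq
    simp only [eval_mul, eval_pow, eval_C, eval_add, eval_sub, eval_one, eval_X]
    rw [h1, h2]
    obtain ⟨d, hd⟩ : ∃ d, M - 1 = d + j := ⟨M - 1 - j, by omega⟩
    rw [hd, Nat.add_sub_cancel]
    push_cast
    ring
  rw [hermForm_vecMulVec, hq, map_mul, map_pow, conj_halfPt, inv_pow, Complex.conj_ofReal]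
  have hw := pow_ne_zero (M - 1) (halfPt_ne_zero f)
  push_cast
  field_simp

lemma exists_rep_of_mem_segmentCone {A B : ℝ} {K : ℕ} {G : ℝ[X]}
    (hG : G ∈ segmentCone A B (2 * K)) :
    ∃ (Q : Matrix (Fin (K + 1)) (Fin (K + 1)) ℂ) (P : Matrix (Fin K) (Fin K) ℂ),
      Q.PosSemidef ∧ P.PosSemidef ∧ ∀ f : ℝ, Real.cos (Real.pi * f) ≠ 0 →
        ((Real.cos (Real.pi * f) ^ (2 * K) * G.eval (Real.tan (Real.pi * f)) : ℝ) : ℂ) =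
          hermForm Q (circlePt f) +
            ((Real.cos (Real.pi * f) ^ 2 * ((Real.tan (Real.pi * f) - A) *
              (B - Real.tan (Real.pi * f))) : ℝ) : ℂ) * hermForm P (circlePt f) := by
  induction hG using AddSubmonoid.closure_induction with
  | zero => exact ⟨0, 0, .zero, .zero, by simp⟩
  | add x y _ _ hx hy =>
    obtain ⟨Q, P, hQ, hP, h⟩ := hx
    obtain ⟨Q', P', hQ', hP', h'⟩ := hy
    refine ⟨Q + Q', P + P', hQ.add hQ', hP.add hP', fun f hc => ?_⟩
    rw [hermForm_add, hermForm_add, eval_add, mul_add, Complex.ofReal_add, h f hc, h' f hc]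
    ring
  | mem x hx =>
    obtain ⟨i, j, m, s, hijm, hs, rfl⟩ := hx
    have hdeg : ∀ i' j' : ℕ, ((X - C A) ^ i' * (C B - X) ^ j' * s).natDegree ≤ i' + j' + m := by
      intro i' j'
      have h1 : (X - C A).natDegree ≤ 1 := by compute_degree
      have h2 : (C B - X).natDegree ≤ 1 := by compute_degree
      have h3 := natDegree_pow_le_of_le i' h1
      have h4 := natDegree_pow_le_of_le j' h2
      have h5 := natDegree_mul_le (p := (X - C A) ^ i') (q := (C B - X) ^ j')
      have h6 := natDegree_mul_le (p := (X - C A) ^ i' * (C B - X) ^ j') (q := s)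
      omega
    rcases Nat.even_or_odd' i with ⟨i', rfl | rfl⟩
    · obtain ⟨j', rfl⟩ : ∃ j', j = 2 * j' := ⟨j / 2, by omega⟩
      obtain ⟨Q, hQ, h⟩ := exists_hermForm_eq_sq (M := K + 1)
        (s := (X - C A) ^ i' * (C B - X) ^ j' * s) (by have := hdeg i' j'; omega)
      refine ⟨Q, 0, hQ, .zero, fun f hc => ?_⟩
      rw [h f hc, hermForm_zero, mul_zero, add_zero]
      congr 1
      simp only [eval_mul, eval_pow, eval_sub, eval_X, eval_C, Nat.add_sub_cancel]
      ring
    · obtain ⟨j', rfl⟩ : ∃ j', j = 2 * j' + 1 := ⟨j / 2, by omega⟩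
      obtain ⟨L, rfl⟩ : ∃ L, K = L + 1 := ⟨K - 1, by omega⟩
      obtain ⟨P, hP, h⟩ := exists_hermForm_eq_sq (M := L + 1)
        (s := (X - C A) ^ i' * (C B - X) ^ j' * s) (by have := hdeg i' j'; omega)
      refine ⟨0, P, .zero, hP, fun f hc => ?_⟩
      rw [h f hc, hermForm_zero, zero_add, ← Complex.ofReal_mul]
      congr 1
      simp only [eval_mul, eval_pow, eval_sub, eval_X, eval_C, Nat.add_sub_cancel]
      ring

lemma sum_Icc_eq_sum_range (K : ℕ) (g : ℤ → ℂ) :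
    ∑ n ∈ Finset.Icc (-(K : ℤ)) K, g n = ∑ m ∈ Finset.range (2 * K + 1), g ((m : ℤ) - K) := by
  refine Finset.sum_bij' (fun n _ => (n + K).toNat) (fun m _ => (m : ℤ) - K) ?_ ?_ ?_ ?_ ?_
  · intro n hn; simp only [Finset.mem_Icc, Finset.mem_range] at *; omega
  · intro n hn; simp only [Finset.mem_Icc, Finset.mem_range] at *; omega
  · intro n hn; simp only [Finset.mem_Icc] at *; omega
  · intro n hn; simp only [Finset.mem_range] at *; omega
  · intro n hn; simp only [Finset.mem_Icc] at *; congr 1; omega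

/-- A trigonometric polynomial of degree `K` has real part `cos(πf)^(2K) G(tan(πf))` for some real
`G` of degree at most `2K`. The polynomial comes from
`u^n = cos(πf)^(2K) (1 - it)^(K+n) (1 + it)^(K-n)`, where `t = tan(πf)`. -/
lemma exists_tan_polynomial (K : ℕ) (r : ℤ → ℂ) :
    ∃ G : ℝ[X], G.natDegree ≤ 2 * K ∧ ∀ f : ℝ, Real.cos (Real.pi * f) ≠ 0 →
      (∑ n ∈ Finset.Icc (-(K : ℤ)) K, r n * circlePt f ^ n).re =
        Real.cos (Real.pi * f) ^ (2 * K) * G.eval (Real.tan (Real.pi * f)) := by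
  let F : ℂ[X] := ∑ m ∈ Finset.range (2 * K + 1), C (r ((m : ℤ) - K)) *
    (1 - C Complex.I * X) ^ m * (1 + C Complex.I * X) ^ (2 * K - m)
  have hF : F.natDegree < 2 * K + 1 := by
    refine Nat.lt_succ_of_le (natDegree_sum_le_of_forall_le _ _ fun m hm => ?_)
    have h1 : (1 - C Complex.I * X).natDegree ≤ 1 := by compute_degree
    have h2 : (1 + C Complex.I * X).natDegree ≤ 1 := by compute_degree
    have hm := Finset.mem_range.1 hm
    refine natDegree_mul_le.trans ?_
    have h3 := natDegree_C_mul_le (r ((m : ℤ) - K)) ((1 - C Complex.I * X) ^ m)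
    have h4 := natDegree_pow_le_of_le m h1
    have h5 := natDegree_pow_le_of_le (2 * K - m) h2
    omega
  refine ⟨∑ m ∈ Finset.range (2 * K + 1), C (F.coeff m).re * X ^ m, ?_, fun f hc => ?_⟩
  · refine natDegree_sum_le_of_forall_le _ _ fun m hm => ?_
    have hm := Finset.mem_range.1 hm
    exact (natDegree_C_mul_X_pow_le _ _).trans (by omega)
  · have h1 : eval (Real.tan (Real.pi * f))
        (∑ m ∈ Finset.range (2 * K + 1), C (F.coeff m).re * X ^ m) =
          (F.eval (Real.tan (Real.pi * f) : ℂ)).re := by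
      rw [eval_eq_sum_range' hF, eval_finsetSum, Complex.re_sum]
      refine Finset.sum_congr rfl fun m _ => ?_
      rw [← Complex.ofReal_pow, Complex.re_mul_ofReal]
      simp
    rw [h1, ← Complex.re_ofReal_mul]
    congr 1
    rw [sum_Icc_eq_sum_range, eval_finsetSum, Finset.mul_sum]
    refine Finset.sum_congr rfl fun m hm => ?_
    have hm := Finset.mem_range.1 hm
    simp only [eval_mul, eval_pow, eval_C, eval_add, eval_sub, eval_one, eval_X]
    have h2 : circlePt f ^ ((m : ℤ) - K) = halfPt f ^ m * (halfPt f)⁻¹ ^ (2 * K - m) := by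
      rw [circlePt_eq_sq, ← zpow_natCast, ← zpow_natCast, ← zpow_natCast, _root_.inv_zpow', ← _root_.zpow_mul,
        ← zpow_add₀ (halfPt_ne_zero f)]
      congr 1
      push_cast [Nat.cast_sub (show m ≤ 2 * K by omega)]
      ring
    rw [h2, inv_halfPt_eq_tan hc, halfPt_eq_tan hc]
    have h3 : 2 * K = m + (2 * K - m) := by omega
    have h4 : ((Real.cos (Real.pi * f) ^ (2 * K) : ℝ) : ℂ) =
        (Real.cos (Real.pi * f) : ℂ) ^ m * (Real.cos (Real.pi * f) : ℂ) ^ (2 * K - m) := by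
      rw [← pow_add, ← h3]; push_cast; rfl
    rw [h4, mul_pow, mul_pow]
    ring

lemma coeff_eq_of_sum_eq {K : ℕ} {r c : ℤ → ℂ} {S : Set ℝ} (hS : (circlePt '' S).Infinite)
    (h : ∀ f ∈ S, ∑ n ∈ Finset.Icc (-(K : ℤ)) K, r n * circlePt f ^ n =
      ∑ n ∈ Finset.Icc (-(K : ℤ)) K, c n * circlePt f ^ n) (n : ℕ) (hn : n ≤ K) :
    r n = c n := by
  let p : (ℤ → ℂ) → ℂ[X] := fun r =>
    ∑ m ∈ Finset.range (2 * K + 1), C (r ((m : ℤ) - K)) * X ^ m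
  have hp : ∀ (r : ℤ → ℂ) (f : ℝ), (p r).eval (circlePt f) =
      circlePt f ^ K * ∑ n ∈ Finset.Icc (-(K : ℤ)) K, r n * circlePt f ^ n := by
    intro r f
    rw [sum_Icc_eq_sum_range, Finset.mul_sum, eval_finsetSum]
    refine Finset.sum_congr rfl fun m _ => ?_
    rw [zpow_sub₀ (circlePt_ne_zero f), eval_mul, eval_C, eval_pow, eval_X]
    have := pow_ne_zero K (circlePt_ne_zero f)
    simp only [zpow_natCast]
    field_simp
  have hc : ∀ r : ℤ → ℂ, (p r).coeff (n + K) = r n := by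
    intro r
    simp only [p, finsetSum_coeff, coeff_C_mul_X_pow]
    rw [Finset.sum_ite_eq, if_pos (Finset.mem_range.2 (by omega))]
    push_cast; congr 1; ring
  have hpq : p r = p c := by
    refine eq_of_infinite_eval_eq _ _ (hS.mono ?_)
    rintro _ ⟨f, hf, rfl⟩
    simp only [Set.mem_ofPred_eq, hp, h f hf]
  rw [← hc r, ← hc c, hpq]

end transfer

/-! ### Hermitian symmetry of the coefficients, and the equivalence -/

lemma elemToeplitz_conjTranspose (M : ℕ) (m : ℤ) :
    (elemToeplitz M m)ᴴ = elemToeplitz M (-m) := by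
  ext j k
  simp only [conjTranspose_apply, elemToeplitz, of_apply]
  have : (j : ℤ) - k = m ↔ (k : ℤ) - j = -m := by omega
  simp only [this]
  split_ifs <;> simp

lemma phiMat_conjTranspose (M : ℕ) (d0 : ℝ) (d1 : ℂ) (n : ℤ) :
    (phiMat M d0 d1 n)ᴴ = phiMat M d0 d1 (-n) := by
  simp only [phiMat, conjTranspose_add, conjTranspose_smul, elemToeplitz_conjTranspose]
  rw [show -(n + 1) = -n - 1 by ring, show -(n - 1) = -n + 1 by ring]
  simp only [Complex.star_def, Complex.conj_ofReal, Complex.conj_conj]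
  abel

/-- Applied with `T = Θ^(n)`, `T' = Θ^(-n)`, or likewise with `Φ`, this shows that the traces satisfy
the symmetry `c_{-n} = conj c_n`. -/
lemma trace_neg_eq_conj {M : ℕ} {T T' Q : Matrix (Fin M) (Fin M) ℂ} (hT : Tᴴ = T')
    (hQ : Q.IsHermitian) : Matrix.trace (T' * Q) = starRingEnd ℂ (Matrix.trace (T * Q)) := by
  rw [starRingEnd_apply, ← trace_conjTranspose, conjTranspose_mul, hT, hQ.eq, trace_mul_comm]

lemma infinite_circlePt_image {a b : ℝ} (ha : -(1 / 2) < a) (hab : a < b) (hb : b < 1 / 2) :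
    (circlePt '' Set.Icc a b).Infinite := by
  refine (Set.Icc_infinite hab).image fun x hx y hy hxy => ?_
  have hxy : Complex.exp _ = Complex.exp _ := hxy
  obtain ⟨n, hn⟩ := Complex.exp_eq_exp_iff_exists_int.1 hxy
  have h1 : ((Real.pi : ℂ) * Complex.I) * (2 * (y - x - n)) = 0 := by linear_combination hn
  have h2 : (y - x - n : ℂ) = 0 := by
    have : (Real.pi : ℂ) * Complex.I ≠ 0 :=
      mul_ne_zero (by exact_mod_cast Real.pi_ne_zero) Complex.I_ne_zero
    simpa [this] using h1
  have h3 : y - x = n := by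
    have : y - x - n = (0 : ℝ) := by exact_mod_cast h2
    linarith
  have h4 : n = 0 := by
    have l1 : (n : ℝ) < 1 := by linarith [hx.1, hy.2]
    have l2 : (-1 : ℝ) < n := by linarith [hx.2, hy.1]
    have l1' : n < 1 := by exact_mod_cast l1
    have l2' : -1 < n := by exact_mod_cast l2
    omega
  rw [h4] at h3; push_cast at h3; linarith

/-- A real-valued trigonometric polynomial `R(f) = Σ_{n=-K}^{K} r_n e^{-i 2π f n}` (with
`r_{-n} = conj r_n`) is nonnegative on a segment `[a, b] ⊂ [-1/2, 1/2]` if and only if there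
exist positive semidefinite Hermitian matrices `Q ∈ ℂ^{(K+1)×(K+1)}` and `P ∈ ℂ^{K×K}` with
`r_n = Tr(Θ_{K+1}^(n) Q) + Tr(Φ_K^(n) P)` for all `n ∈ {0,…,K}`, where `Φ_K^(n)` is built from
`d_0 = -(tan(πa) tan(πb) + 1)/2` and
`d_1 = (1 - tan(πa) tan(πb))/4 + i (tan(πa) + tan(πb))/4`. -/
theorem nonneg_on_segment_iff_trace_parametrization (K : ℕ) (hK : 1 ≤ K) (r : ℤ → ℂ)
    (hr : ∀ n : ℤ, r (-n) = (starRingEnd ℂ) (r n))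
    (a b : ℝ) (ha : -(1 / 2) < a) (hab : a < b) (hb : b < 1 / 2) :
    (∀ f ∈ Set.Icc a b,
        (0 : ℂ) ≤ ∑ n ∈ Finset.Icc (-(K : ℤ)) (K : ℤ),
          r n * Complex.exp (-(2 * Real.pi * f * n) * Complex.I)) ↔
      ∃ (Q : Matrix (Fin (K + 1)) (Fin (K + 1)) ℂ) (P : Matrix (Fin K) (Fin K) ℂ),
        Q.PosSemidef ∧ P.PosSemidef ∧
          ∀ n : Fin (K + 1),
            r (n : ℤ) =
              Matrix.trace (elemToeplitz (K + 1) (n : ℤ) * Q) +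
                Matrix.trace
                  (phiMat K (-(Real.tan (Real.pi * a) * Real.tan (Real.pi * b) + 1) / 2)
                    (((1 - Real.tan (Real.pi * a) * Real.tan (Real.pi * b)) / 4 : ℝ) +
                      Complex.I *
                        ((Real.tan (Real.pi * a) + Real.tan (Real.pi * b)) / 4 : ℝ))
                    (n : ℤ) * P) := by
  simp only [exp_eq_circlePt_zpow]
  have hpi := Real.pi_pos
  have hmem : ∀ f ∈ Set.Icc a b, Real.pi * f ∈ Set.Ioo (-(Real.pi / 2)) (Real.pi / 2) := by
    intro f hf
    constructor <;> nlinarith [hf.1, hf.2]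
  have hcos : ∀ f ∈ Set.Icc a b, 0 < Real.cos (Real.pi * f) := fun f hf =>
    Real.cos_pos_of_mem_Ioo (hmem f hf)
  have ha' : a ∈ Set.Icc a b := ⟨le_rfl, hab.le⟩
  have hb' : b ∈ Set.Icc a b := ⟨hab.le, le_rfl⟩
  have hmono := Real.strictMonoOn_tan
  have hAB : Real.tan (Real.pi * a) < Real.tan (Real.pi * b) :=
    hmono (hmem a ha') (hmem b hb') (by nlinarith)
  set A := Real.tan (Real.pi * a) with hA
  set B := Real.tan (Real.pi * b) with hB
  -- The coefficients produced by `Q` and `P` sum to `hermForm Q + D(f) hermForm P`.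
  have hsum : ∀ (Q : Matrix (Fin (K + 1)) (Fin (K + 1)) ℂ) (P : Matrix (Fin K) (Fin K) ℂ),
      ∀ f ∈ Set.Icc a b, ∑ n ∈ Finset.Icc (-(K : ℤ)) K,
        (Matrix.trace (elemToeplitz (K + 1) n * Q) + Matrix.trace
          (phiMat K (-(A * B + 1) / 2)
            (((1 - A * B) / 4 : ℝ) + Complex.I * ((A + B) / 4 : ℝ)) n * P)) * circlePt f ^ n =
        hermForm Q (circlePt f) +
            ((Real.cos (Real.pi * f) ^ 2 * ((Real.tan (Real.pi * f) - A) *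
              (B - Real.tan (Real.pi * f))) : ℝ) : ℂ) * hermForm P (circlePt f) := by
    intro Q P f hf
    have hQ := sum_trace_elemToeplitz (K := K) Q 0 f (by simp)
    simp only [add_zero, neg_zero, zpow_zero, one_mul] at hQ
    simp only [add_mul, Finset.sum_add_distrib]
    rw [hQ, sum_trace_phiMat, weight_eq (hcos f hf).ne']
  constructor
  · intro h
    obtain ⟨G, hGd, hG⟩ := exists_tan_polynomial K r
    have hGnn : ∀ t ∈ Set.Icc A B, 0 ≤ G.eval t := by
      intro t ht
      have harc := Real.arctan_mem_Ioo t
      have hf : Real.arctan t / Real.pi ∈ Set.Icc a b := by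
        constructor
        · rw [le_div_iff₀ hpi, mul_comm, ← Real.arctan_tan (hmem a ha').1 (hmem a ha').2]
          exact Real.arctan_mono ht.1
        · rw [div_le_iff₀ hpi, mul_comm b, ← Real.arctan_tan (hmem b hb').1 (hmem b hb').2]
          exact Real.arctan_mono ht.2
      have h1 := (Complex.le_def.1 (h _ hf)).1
      rw [hG _ (hcos _ hf).ne', mul_div_cancel₀ _ hpi.ne', Real.tan_arctan] at h1
      exact nonneg_of_mul_nonneg_right h1 (pow_pos (Real.cos_arctan_pos t) _)
    obtain ⟨Q, P, hQ, hP, hrep⟩ := exists_rep_of_mem_segmentCone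
      (mem_segmentCone_of_nonneg hAB (2 * K) G hGd hGnn)
    refine ⟨Q, P, hQ, hP, fun n => ?_⟩
    refine coeff_eq_of_sum_eq (infinite_circlePt_image ha hab hb) (fun f hf => ?_) (n : ℕ)
      (Nat.lt_succ_iff.1 n.2) (c := fun n => Matrix.trace (elemToeplitz (K + 1) n * Q) +
        Matrix.trace (phiMat K (-(A * B + 1) / 2)
          (((1 - A * B) / 4 : ℝ) + Complex.I * ((A + B) / 4 : ℝ)) n * P))
    -- The hypothesis `0 ≤ R(f)` in `ℂ` includes that `R(f)` is real.
    rw [hsum Q P f hf, ← hrep f (hcos f hf).ne', ← hG f (hcos f hf).ne']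
    exact Complex.ext rfl (Complex.le_def.1 (h f hf)).2.symm
  · rintro ⟨Q, P, hQ, hP, hrep⟩ f hf
    have hn : ∀ n : ℕ, n ≤ K → r n =
        Matrix.trace (elemToeplitz (K + 1) n * Q) + Matrix.trace
          (phiMat K (-(A * B + 1) / 2)
            (((1 - A * B) / 4 : ℝ) + Complex.I * ((A + B) / 4 : ℝ)) n * P) := fun n hn =>
      hrep ⟨n, Nat.lt_succ_of_le hn⟩
    have key : ∀ n ∈ Finset.Icc (-(K : ℤ)) K, r n * circlePt f ^ n =
        (Matrix.trace (elemToeplitz (K + 1) n * Q) + Matrix.trace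
          (phiMat K (-(A * B + 1) / 2)
            (((1 - A * B) / 4 : ℝ) + Complex.I * ((A + B) / 4 : ℝ)) n * P)) * circlePt f ^ n := by
      intro n hnK
      rw [Finset.mem_Icc] at hnK
      congr 1
      obtain ⟨m, rfl | rfl⟩ := Int.eq_nat_or_neg n
      · exact hn m (by omega)
      · rw [hr, hn m (by omega), map_add,
          trace_neg_eq_conj (elemToeplitz_conjTranspose _ _) hQ.isHermitian,
          trace_neg_eq_conj (phiMat_conjTranspose _ _ _ _) hP.isHermitian]
    rw [Finset.sum_congr rfl key, hsum Q P f hf]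
    have hta : A ≤ Real.tan (Real.pi * f) :=
      hmono.monotoneOn (hmem a ha') (hmem f hf) (by nlinarith [hf.1])
    have htb : Real.tan (Real.pi * f) ≤ B :=
      hmono.monotoneOn (hmem f hf) (hmem b hb') (by nlinarith [hf.2])
    refine add_nonneg (hermForm_nonneg hQ _) (mul_nonneg ?_ (hermForm_nonneg hP _))
    rw [Complex.zero_le_real]
    exact mul_nonneg (sq_nonneg _) (mul_nonneg (sub_nonneg.2 hta) (sub_nonneg.2 htb))
end

section
/- Let N ≥ 1, x_0,…,x_{N−1} ∈ ℂ, T_s > 0, and let p : ℝ → ℝ be continuous with compact support. Define the continuous signal x(t) = Σ_{n=0}^{N−1} x_n p(t − n T_s). Then for every τ ∈ ℝ and every f ∈ ℝ, the continuous-time ambiguity function satisfies ∫_ℝ x(t)·conj(x(t − τ))·e^{−i 2π f (t − τ)} dt = Σ_{l=−(N−1)}^{N−1} A(l, f)·χ(τ − l T_s, f), where A(l, f) = Σ_{n = max(0,l)}^{min(N−1, N−1+l)} x_n · conj(x_{n−l}) · e^{−i 2π f T_s (n−l)} and χ(u, f) = ∫_ℝ p(s)·p(s − u)·e^{−i 2π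 f (s − u)} ds. -/
open MeasureTheory

/-!
Expanding both copies of the signal writes the ambiguity function as a double sum over `(n, m)` of
`x_n conj(x_m) ∫ p(t - n T_s) p(t - τ - m T_s) e^{-i 2π f (t - τ)} dt`. The substitution
`t = s + n T_s` turns this integral into `e^{-i 2π f T_s m} χ(τ - (n - m) T_s, f)`
(`integral_cross_term`), so grouping the pairs by the lag `l = n - m` gives the claim.
The exchange of sum and integral is legitimate because every cross term is continuous with compact
support (`integrable_cross_term`).
-/

lemma integrable_cross_term (Ts : ℝ) (p : ℝ → ℝ) (hp : Continuous p) (hps : HasCompactSupport p)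
    (τ f : ℝ) (n m : ℕ) :
    Integrable (fun t : ℝ => (p (t - n * Ts) : ℂ) * ((p (t - τ - m * Ts) : ℂ) *
      Complex.exp (-(2 * Real.pi * f * (t - τ)) * Complex.I))) := by
  have hsupp : HasCompactSupport (fun t : ℝ => (p (t - n * Ts) : ℂ)) := by
    have h : HasCompactSupport (fun t : ℝ => p (t - n * Ts)) := by
      simpa [Function.comp_def] using
        hps.comp_homeomorph (Homeomorph.subRight ((n : ℝ) * Ts))
    exact h.comp_left (g := fun r : ℝ => (r : ℂ)) Complex.ofReal_zero
  exact Continuous.integrable_of_hasCompactSupport (by fun_prop) hsupp.mul_right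

lemma integral_cross_term (Ts : ℝ) (p : ℝ → ℝ) (τ f : ℝ) (n m : ℕ) :
    (∫ t : ℝ, (p (t - n * Ts) : ℂ) * ((p (t - τ - m * Ts) : ℂ) *
      Complex.exp (-(2 * Real.pi * f * (t - τ)) * Complex.I))) =
    Complex.exp (-(2 * Real.pi * f * Ts * m) * Complex.I) *
      ∫ s : ℝ, (p s : ℂ) * (p (s - (τ - ((n : ℤ) - (m : ℤ) : ℤ) * Ts)) : ℂ) *
        Complex.exp (-(2 * Real.pi * f * (s - (τ - ((n : ℤ) - (m : ℤ) : ℤ) * Ts))) *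
          Complex.I) := by
  rw [← integral_add_right_eq_self _ ((n : ℝ) * Ts), ← integral_const_mul]
  congr 1
  ext s
  have h1 : s + n * Ts - n * Ts = s := by ring
  have h2 : s + n * Ts - τ - m * Ts = s - (τ - ((n : ℤ) - (m : ℤ) : ℤ) * Ts) := by
    push_cast
    ring
  have h3 : -(2 * Real.pi * f * (((s + n * Ts : ℝ) : ℂ) - τ)) * Complex.I =
      -(2 * Real.pi * f * Ts * m) * Complex.I +
        -(2 * Real.pi * f * (s - (τ - (((n : ℤ) - (m : ℤ) : ℤ) : ℂ) * Ts))) * Complex.I := by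
    push_cast
    ring
  rw [h1, h2, h3, Complex.exp_add]
  ring

/-- For the continuous signal `x(t) = Σ_{n=0}^{N-1} x_n p(t - n T_s)` built from a continuous
compactly supported pulse `p`, the continuous-time ambiguity function decomposes as
`A_c(τ, f) = Σ_{l=-(N-1)}^{N-1} A(l, f) χ(τ - l T_s, f)`, where
`A(l, f) = Σ_{n=max(0,l)}^{min(N-1,N-1+l)} x_n conj(x_{n-l}) e^{-i 2π f T_s (n-l)}` and
`χ(u, f) = ∫ p(s) p(s - u) e^{-i 2π f (s - u)} ds`. -/
theorem ctaf_eq_sum_dtaf_chi (N : ℕ) (hN : 1 ≤ N) (x : ℕ → ℂ) (Ts : ℝ) (hTs : 0 < Ts)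
    (p : ℝ → ℝ) (hp : Continuous p) (hps : HasCompactSupport p) (τ f : ℝ) :
    (∫ t : ℝ,
        (∑ n ∈ Finset.range N, x n * (p (t - n * Ts) : ℂ)) *
          (starRingEnd ℂ) (∑ n ∈ Finset.range N, x n * (p (t - τ - n * Ts) : ℂ)) *
            Complex.exp (-(2 * Real.pi * f * (t - τ)) * Complex.I)) =
      ∑ l ∈ Finset.Icc (-((N : ℤ) - 1)) ((N : ℤ) - 1),
        (∑ n ∈ Finset.Icc (max 0 l) (min ((N : ℤ) - 1) ((N : ℤ) - 1 + l)),
            x n.toNat * (starRingEnd ℂ) (x (n - l).toNat) *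
              Complex.exp (-(2 * Real.pi * f * Ts * ((n : ℝ) - (l : ℝ))) * Complex.I)) *
          (∫ s : ℝ,
            (p s : ℂ) * (p (s - (τ - l * Ts)) : ℂ) *
              Complex.exp (-(2 * Real.pi * f * (s - (τ - l * Ts))) * Complex.I)) := by
  have hexp : ∀ t : ℝ,
      (∑ n ∈ Finset.range N, x n * (p (t - n * Ts) : ℂ)) *
          (starRingEnd ℂ) (∑ n ∈ Finset.range N, x n * (p (t - τ - n * Ts) : ℂ)) *
            Complex.exp (-(2 * Real.pi * f * (t - τ)) * Complex.I) =
      ∑ q ∈ Finset.range N ×ˢ Finset.range N, x q.1 * (starRingEnd ℂ) (x q.2) *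
        ((p (t - q.1 * Ts) : ℂ) * ((p (t - τ - q.2 * Ts) : ℂ) *
          Complex.exp (-(2 * Real.pi * f * (t - τ)) * Complex.I))) := by
    intro t
    rw [map_sum, Finset.sum_mul_sum, ← Finset.sum_product', Finset.sum_mul]
    refine Finset.sum_congr rfl fun q _ => ?_
    rw [map_mul, Complex.conj_ofReal]
    ring
  simp_rw [hexp]
  rw [integral_finsetSum _ fun q _ =>
    (integrable_cross_term Ts p hp hps τ f q.1 q.2).const_mul _]
  simp_rw [integral_const_mul, integral_cross_term, Finset.sum_mul]
  rw [Finset.sum_sigma']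
  -- Reindex: the pair `(n, m)` corresponds to the lag `l = n - m` together with `n`.
  refine Finset.sum_bij' (fun q _ => ⟨(q.1 : ℤ) - (q.2 : ℤ), (q.1 : ℤ)⟩)
    (fun r _ => (r.2.toNat, (r.2 - r.1).toNat)) ?_ ?_ ?_ ?_ ?_
  · rintro ⟨n, m⟩ h
    simp only [Finset.mem_product, Finset.mem_range] at h
    simp only [Finset.mem_sigma, Finset.mem_Icc]
    omega
  · rintro ⟨l, n⟩ h
    simp only [Finset.mem_sigma, Finset.mem_Icc] at h
    simp only [Finset.mem_product, Finset.mem_range]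
    omega
  · rintro ⟨n, m⟩ _
    simp
  · rintro ⟨l, n⟩ h
    simp only [Finset.mem_sigma, Finset.mem_Icc] at h
    have h1 : ((n.toNat : ℕ) : ℤ) = n := by omega
    have h2 : (((n - l).toNat : ℕ) : ℤ) = n - l := by omega
    simp only [h1, h2, sub_sub_cancel]
  · rintro ⟨n, m⟩ _
    simp only [sub_sub_cancel, Int.toNat_natCast]
    have h : -(2 * Real.pi * f * Ts * ((((n : ℤ) : ℝ) : ℂ) - ((((n : ℤ) - (m : ℤ) : ℤ) : ℝ) : ℂ))) *
        Complex.I = -(2 * Real.pi * f * Ts * m) * Complex.I := by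
      push_cast
      ring
    rw [h]
    ring
end
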